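/- Let k be a commutative ring containing ℚ, Q a smooth k-algebra of relative dimension n, and f ∈ Q. Let θ : P → R be a strict morphism of matrix factorizations of f, where P = (P₁, P₀, A, B) and R = (R₁, R₀, C, D), and let cone(θ) be the matrix factorization with modules R₁⊕P₀ and R₀⊕P₁ and differentials (in block form) [C, θ₀; 0, −B] and [D, θ₁; 0, −A]. Then ch(R) = ch(P) + ch(cone(θ)) in H₀((Ω•, df, n)_{ℤ/2}); concretely, choosing connections on P and R and the direct-sum connections on cone(θ), str(At²ⁱ_R) = str(At²ⁱ_P) + str(At²ⁱ_{cone(θ)}) in Ω^{2i} for every i. -/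

import Mathlib

/-!
STATEMENT 14: Let k ⊇ ℚ and Q a smooth k-algebra of relative dimension n. For a strict
morphism θ : P → R of matrix factorizations of f, with cone(θ) the matrix factorization
with modules R₁⊕P₀, R₀⊕P₁ and differentials [C, θ₀; 0, −B], [D, θ₁; 0, −A], choosing
connections on P and R and the direct-sum connections on cone(θ), one has
str(At²ⁱ_R) = str(At²ⁱ_P) + str(At²ⁱ_{cone(θ)}) for every i (whence
ch(R) = ch(P) + ch(cone(θ)) in H₀((Ω•, df, n)_{ℤ/2})).
-/

open TensorProduct

universe u
variable (k Q : Type u) [CommRing k] [CommRing Q] [Algebra k Q]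

structure Conn (k Q E : Type u) [CommRing k] [CommRing Q] [Algebra k Q]
    [AddCommGroup E] [Module Q E] where
  toFun : E → (Ω[Q⁄k] ⊗[Q] E)
  map_add : ∀ x y, toFun (x + y) = toFun x + toFun y
  leibniz : ∀ (q : Q) (x : E),
    toFun (q • x) = (KaehlerDifferential.D k Q) q ⊗ₜ[Q] x + q • toFun x

/-- `Λ•Ω¹ ⊗ (Ω¹ ⊗ E) → Λ•Ω¹ ⊗ E`, multiplying the middle one-form in from the right. -/
noncomputable def stepMul (E : Type u) [AddCommGroup E] [Module Q E] :
    (ExteriorAlgebra Q (Ω[Q⁄k]) ⊗[Q] (Ω[Q⁄k] ⊗[Q] E)) →ₗ[Q]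
      (ExteriorAlgebra Q (Ω[Q⁄k]) ⊗[Q] E) :=
  (TensorProduct.map
      (TensorProduct.lift ((LinearMap.mul Q (ExteriorAlgebra Q (Ω[Q⁄k]))).compl₂
        (ExteriorAlgebra.ι Q)))
      LinearMap.id) ∘ₗ
    (TensorProduct.assoc Q (ExteriorAlgebra Q (Ω[Q⁄k])) (Ω[Q⁄k]) E).symm.toLinearMap

/-- `Atⁱ : E → Λ•Ω¹ ⊗ E`, composing the Atiyah class with itself `i` times and multiplying
the resulting one-forms together by the wedge product (`At⁰ = id`). -/
noncomputable def atIter (E : Type u) [AddCommGroup E] [Module Q E]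
    (At : E →ₗ[Q] Ω[Q⁄k] ⊗[Q] E) :
    ℕ → (E →ₗ[Q] ExteriorAlgebra Q (Ω[Q⁄k]) ⊗[Q] E)
  | 0 => TensorProduct.mk Q (ExteriorAlgebra Q (Ω[Q⁄k])) E 1
  | (i+1) => stepMul k Q E ∘ₗ
      (LinearMap.lTensor (ExteriorAlgebra Q (Ω[Q⁄k])) At) ∘ₗ atIter E At i

/-- Trace, with coefficients in a module `N`, of a map `E → N ⊗ E` on a f.g. projective
module `E`, computed via a presentation of `E` as a retract of `Fin r → Q`. -/
noncomputable def trC {N E : Type u} [AddCommGroup N] [Module Q N]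
    [AddCommGroup E] [Module Q E] {r : ℕ}
    (p : (Fin r → Q) →ₗ[Q] E) (s : E →ₗ[Q] (Fin r → Q))
    (g : E →ₗ[Q] N ⊗[Q] E) : N :=
  ∑ j : Fin r, (TensorProduct.rid Q N)
    ((LinearMap.lTensor N (LinearMap.proj j))
      ((LinearMap.lTensor N s) (g (p (Pi.single j 1)))))

/-- The supertrace of a map `E₀ ⊕ E₁ → N ⊗ (E₀ ⊕ E₁)`: the trace of its `(0,0)`-component
minus the trace of its `(1,1)`-component. -/
noncomputable def strT {N E₀ E₁ : Type u} [AddCommGroup N] [Module Q N]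
    [AddCommGroup E₀] [Module Q E₀] [AddCommGroup E₁] [Module Q E₁]
    {r₀ r₁ : ℕ} (p₀ : (Fin r₀ → Q) →ₗ[Q] E₀) (s₀ : E₀ →ₗ[Q] (Fin r₀ → Q))
    (p₁ : (Fin r₁ → Q) →ₗ[Q] E₁) (s₁ : E₁ →ₗ[Q] (Fin r₁ → Q))
    (T : (E₀ × E₁) →ₗ[Q] N ⊗[Q] (E₀ × E₁)) : N :=
  trC Q p₀ s₀ ((LinearMap.lTensor N (LinearMap.fst Q E₀ E₁)) ∘ₗ T ∘ₗ LinearMap.inl Q E₀ E₁)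
    - trC Q p₁ s₁ ((LinearMap.lTensor N (LinearMap.snd Q E₀ E₁)) ∘ₗ T ∘ₗ LinearMap.inr Q E₀ E₁)

/-!
The cone of `θ : P → R` is an extension of the shift `P[1]` by `R`, and the direct-sum connections
make both `R → cone(θ)` and `cone(θ) → P[1]` parallel. Hence `At` and all its powers are block
triangular on the cone, and the supertrace of a block triangular map is the sum of those of its
diagonal blocks. Passing to `P[1]` negates the Atiyah class, which does not affect even powers, and
exchanges the parities, which negates the supertrace.
-/

attribute [ext] Conn

section

variable {k Q}
variable {N E F E₀ E₁ F₀ F₁ : Type u} [AddCommGroup N] [Module Q N]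
  [AddCommGroup E] [Module Q E] [AddCommGroup F] [Module Q F]
  [AddCommGroup E₀] [Module Q E₀] [AddCommGroup E₁] [Module Q E₁]
  [AddCommGroup F₀] [Module Q F₀] [AddCommGroup F₁] [Module Q F₁]

section Trace

variable {r r' c : ℕ}

theorem map_eq_sum_of_retract {M : Type*} [AddCommGroup M] [Module Q M]
    {p : (Fin r → Q) →ₗ[Q] E} {s : E →ₗ[Q] (Fin r → Q)} (h : ∀ e, p (s e) = e)
    (v : E →ₗ[Q] M) (x : E) : v x = ∑ j, s x j • v (p (Pi.single j 1)) := by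
  conv_lhs => rw [← h x, pi_eq_sum_univ' (s x)]
  simp only [map_sum, map_smul]

variable (N) in
/-- Contraction `N ⊗ E → N` against a linear functional on `E`, linear in both arguments. It turns
the summands of `trC` into values of a bilinear map. -/
noncomputable def contract : (E →ₗ[Q] Q) →ₗ[Q] N ⊗[Q] E →ₗ[Q] N :=
  (LinearMap.lTensorHom N).compr₂ₛₗ (TensorProduct.rid Q N).toLinearMap

theorem contract_apply (φ : E →ₗ[Q] Q) (w : N ⊗[Q] E) :
    contract N φ w = TensorProduct.rid Q N (LinearMap.lTensor N φ w) :=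
  rfl

theorem contract_lTensor (φ : F →ₗ[Q] Q) (u : E →ₗ[Q] F) (w : N ⊗[Q] E) :
    contract N φ (LinearMap.lTensor N u w) = contract N (φ ∘ₗ u) w := by
  rw [contract_apply, contract_apply, LinearMap.lTensor_comp_apply]

theorem trC_eq_sum_contract (p : (Fin r → Q) →ₗ[Q] E) (s : E →ₗ[Q] (Fin r → Q))
    (g : E →ₗ[Q] N ⊗[Q] E) :
    trC Q p s g = ∑ j, contract N (LinearMap.proj j ∘ₗ s) (g (p (Pi.single j 1))) := by
  simp only [trC, contract_apply, LinearMap.lTensor_comp_apply]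

theorem trC_add (p : (Fin r → Q) →ₗ[Q] E) (s : E →ₗ[Q] (Fin r → Q))
    (g g' : E →ₗ[Q] N ⊗[Q] E) : trC Q p s (g + g') = trC Q p s g + trC Q p s g' := by
  simp only [trC, LinearMap.add_apply, map_add, Finset.sum_add_distrib]

theorem trC_comp_comm
    {p : (Fin r → Q) →ₗ[Q] E} {s : E →ₗ[Q] (Fin r → Q)} (h : ∀ e, p (s e) = e)
    {p' : (Fin r' → Q) →ₗ[Q] F} {s' : F →ₗ[Q] (Fin r' → Q)} (h' : ∀ e, p' (s' e) = e)
    (u : E →ₗ[Q] F) (v : F →ₗ[Q] N ⊗[Q] E) :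
    trC Q p s (v ∘ₗ u) = trC Q p' s' (LinearMap.lTensor N u ∘ₗ v) := by
  have functional_expansion (φ : E →ₗ[Q] Q) :
      ∑ j, φ (p (Pi.single j 1)) • (LinearMap.proj j ∘ₗ s) = φ := by
    ext x
    simp only [map_eq_sum_of_retract h φ x, LinearMap.sum_apply, LinearMap.smul_apply,
      LinearMap.comp_apply, LinearMap.proj_apply, smul_eq_mul, mul_comm]
  calc trC Q p s (v ∘ₗ u)
      = ∑ j, contract N (LinearMap.proj j ∘ₗ s) (v (u (p (Pi.single j 1)))) := by
        simp only [trC_eq_sum_contract, LinearMap.comp_apply]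
    _ = ∑ j, ∑ l, s' (u (p (Pi.single j 1))) l •
          contract N (LinearMap.proj j ∘ₗ s) (v (p' (Pi.single l 1))) := by
        simp only [map_eq_sum_of_retract h' v (u _), map_sum, map_smul]
    _ = ∑ l, contract N (∑ j, (LinearMap.proj l ∘ₗ s' ∘ₗ u) (p (Pi.single j 1)) •
          (LinearMap.proj j ∘ₗ s)) (v (p' (Pi.single l 1))) := by
        rw [Finset.sum_comm]
        simp only [map_sum, map_smul, LinearMap.sum_apply, LinearMap.smul_apply,
          LinearMap.comp_apply, LinearMap.proj_apply]
    _ = ∑ l, contract N (LinearMap.proj l ∘ₗ s')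
          (LinearMap.lTensor N u (v (p' (Pi.single l 1)))) := by
        simp only [functional_expansion, contract_lTensor, LinearMap.comp_assoc]
    _ = trC Q p' s' (LinearMap.lTensor N u ∘ₗ v) := by
        simp only [trC_eq_sum_contract, LinearMap.comp_apply]

theorem trC_prod_of_triangular
    {p : (Fin r → Q) →ₗ[Q] E} {s : E →ₗ[Q] (Fin r → Q)} (h : ∀ e, p (s e) = e)
    {p' : (Fin r' → Q) →ₗ[Q] F} {s' : F →ₗ[Q] (Fin r' → Q)} (h' : ∀ e, p' (s' e) = e)
    {pc : (Fin c → Q) →ₗ[Q] (E × F)} {sc : (E × F) →ₗ[Q] (Fin c → Q)}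
    (hc : ∀ e, pc (sc e) = e)
    {g : (E × F) →ₗ[Q] N ⊗[Q] (E × F)} {gE : E →ₗ[Q] N ⊗[Q] E} {gF : F →ₗ[Q] N ⊗[Q] F}
    (hE : g ∘ₗ LinearMap.inl Q E F = LinearMap.lTensor N (LinearMap.inl Q E F) ∘ₗ gE)
    (hF : gF ∘ₗ LinearMap.snd Q E F = LinearMap.lTensor N (LinearMap.snd Q E F) ∘ₗ g) :
    trC Q pc sc g = trC Q p s gE + trC Q p' s' gF := by
  have sub_block : LinearMap.lTensor N (LinearMap.fst Q E F) ∘ₗ g ∘ₗ LinearMap.inl Q E F = gE := by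
    rw [hE, ← LinearMap.comp_assoc, ← LinearMap.lTensor_comp, LinearMap.fst_comp_inl,
      LinearMap.lTensor_id, LinearMap.id_comp]
  have quotient_block :
      LinearMap.lTensor N (LinearMap.snd Q E F) ∘ₗ g ∘ₗ LinearMap.inr Q E F = gF := by
    rw [← LinearMap.comp_assoc, ← hF, LinearMap.comp_assoc, LinearMap.snd_comp_inr,
      LinearMap.comp_id]
  have split : g = (g ∘ₗ LinearMap.inl Q E F) ∘ₗ LinearMap.fst Q E F +
      (g ∘ₗ LinearMap.inr Q E F) ∘ₗ LinearMap.snd Q E F := by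
    apply LinearMap.ext
    rintro ⟨x, y⟩
    simp only [LinearMap.add_apply, LinearMap.comp_apply, LinearMap.fst_apply,
      LinearMap.snd_apply, ← map_add, LinearMap.inl_apply, LinearMap.inr_apply, Prod.mk_add_mk,
      add_zero, zero_add]
  conv_lhs => rw [split]
  rw [trC_add, trC_comp_comm hc h, trC_comp_comm hc h', sub_block, quotient_block]

end Trace

section Supertrace

/-- The diagonal block `E₀ → N ⊗ E₀` of a map on a `ℤ/2`-graded module `E₀ ⊕ E₁`. -/
noncomputable def evenBlock (T : (E₀ × E₁) →ₗ[Q] N ⊗[Q] (E₀ × E₁)) : E₀ →ₗ[Q] N ⊗[Q] E₀ :=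
  LinearMap.lTensor N (LinearMap.fst Q E₀ E₁) ∘ₗ T ∘ₗ LinearMap.inl Q E₀ E₁

/-- The diagonal block `E₁ → N ⊗ E₁` of a map on a `ℤ/2`-graded module `E₀ ⊕ E₁`. -/
noncomputable def oddBlock (T : (E₀ × E₁) →ₗ[Q] N ⊗[Q] (E₀ × E₁)) : E₁ →ₗ[Q] N ⊗[Q] E₁ :=
  LinearMap.lTensor N (LinearMap.snd Q E₀ E₁) ∘ₗ T ∘ₗ LinearMap.inr Q E₀ E₁

theorem strT_eq_trC_sub_trC {r₀ r₁ : ℕ}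
    (p₀ : (Fin r₀ → Q) →ₗ[Q] E₀) (s₀ : E₀ →ₗ[Q] (Fin r₀ → Q))
    (p₁ : (Fin r₁ → Q) →ₗ[Q] E₁) (s₁ : E₁ →ₗ[Q] (Fin r₁ → Q))
    (T : (E₀ × E₁) →ₗ[Q] N ⊗[Q] (E₀ × E₁)) :
    strT Q p₀ s₀ p₁ s₁ T = trC Q p₀ s₀ (evenBlock T) - trC Q p₁ s₁ (oddBlock T) :=
  rfl

section Naturality

variable {T : (E₀ × E₁) →ₗ[Q] N ⊗[Q] (E₀ × E₁)} {T' : (F₀ × F₁) →ₗ[Q] N ⊗[Q] (F₀ × F₁)}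
  {u₀ : E₀ →ₗ[Q] F₀} {u₁ : E₁ →ₗ[Q] F₁}

theorem evenBlock_comp_of_comp_prodMap
    (h : T' ∘ₗ u₀.prodMap u₁ = LinearMap.lTensor N (u₀.prodMap u₁) ∘ₗ T) :
    evenBlock T' ∘ₗ u₀ = LinearMap.lTensor N u₀ ∘ₗ evenBlock T := by
  calc evenBlock T' ∘ₗ u₀
      = LinearMap.lTensor N (LinearMap.fst Q F₀ F₁) ∘ₗ
          (T' ∘ₗ u₀.prodMap u₁) ∘ₗ LinearMap.inl Q E₀ E₁ := by
        ext x
        simp [evenBlock]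
    _ = LinearMap.lTensor N (LinearMap.fst Q F₀ F₁ ∘ₗ u₀.prodMap u₁) ∘ₗ
          T ∘ₗ LinearMap.inl Q E₀ E₁ := by
        rw [h, LinearMap.lTensor_comp]
        rfl
    _ = LinearMap.lTensor N u₀ ∘ₗ evenBlock T := by
        rw [show LinearMap.fst Q F₀ F₁ ∘ₗ u₀.prodMap u₁ = u₀ ∘ₗ LinearMap.fst Q E₀ E₁ from rfl,
          LinearMap.lTensor_comp]
        rfl

theorem oddBlock_comp_of_comp_prodMap
    (h : T' ∘ₗ u₀.prodMap u₁ = LinearMap.lTensor N (u₀.prodMap u₁) ∘ₗ T) :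
    oddBlock T' ∘ₗ u₁ = LinearMap.lTensor N u₁ ∘ₗ oddBlock T := by
  calc oddBlock T' ∘ₗ u₁
      = LinearMap.lTensor N (LinearMap.snd Q F₀ F₁) ∘ₗ
          (T' ∘ₗ u₀.prodMap u₁) ∘ₗ LinearMap.inr Q E₀ E₁ := by
        ext x
        simp [oddBlock]
    _ = LinearMap.lTensor N (LinearMap.snd Q F₀ F₁ ∘ₗ u₀.prodMap u₁) ∘ₗ
          T ∘ₗ LinearMap.inr Q E₀ E₁ := by
        rw [h, LinearMap.lTensor_comp]
        rfl
    _ = LinearMap.lTensor N u₁ ∘ₗ oddBlock T := by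
        rw [show LinearMap.snd Q F₀ F₁ ∘ₗ u₀.prodMap u₁ = u₁ ∘ₗ LinearMap.snd Q E₀ E₁ from rfl,
          LinearMap.lTensor_comp]
        rfl

end Naturality

theorem strT_prod_of_triangular {a₀ a₁ b₀ b₁ c₀ c₁ : ℕ}
    {p₀ : (Fin a₀ → Q) →ₗ[Q] E₀} {s₀ : E₀ →ₗ[Q] (Fin a₀ → Q)} (h₀ : ∀ e, p₀ (s₀ e) = e)
    {p₁ : (Fin a₁ → Q) →ₗ[Q] E₁} {s₁ : E₁ →ₗ[Q] (Fin a₁ → Q)} (h₁ : ∀ e, p₁ (s₁ e) = e)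
    {p₀' : (Fin b₀ → Q) →ₗ[Q] F₀} {s₀' : F₀ →ₗ[Q] (Fin b₀ → Q)} (h₀' : ∀ e, p₀' (s₀' e) = e)
    {p₁' : (Fin b₁ → Q) →ₗ[Q] F₁} {s₁' : F₁ →ₗ[Q] (Fin b₁ → Q)} (h₁' : ∀ e, p₁' (s₁' e) = e)
    {pc₀ : (Fin c₀ → Q) →ₗ[Q] (E₀ × F₀)} {sc₀ : (E₀ × F₀) →ₗ[Q] (Fin c₀ → Q)}
    (hc₀ : ∀ e, pc₀ (sc₀ e) = e)
    {pc₁ : (Fin c₁ → Q) →ₗ[Q] (E₁ × F₁)} {sc₁ : (E₁ × F₁) →ₗ[Q] (Fin c₁ → Q)}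
    (hc₁ : ∀ e, pc₁ (sc₁ e) = e)
    {T : ((E₀ × F₀) × (E₁ × F₁)) →ₗ[Q] N ⊗[Q] ((E₀ × F₀) × (E₁ × F₁))}
    {TE : (E₀ × E₁) →ₗ[Q] N ⊗[Q] (E₀ × E₁)} {TF : (F₀ × F₁) →ₗ[Q] N ⊗[Q] (F₀ × F₁)}
    (hE : T ∘ₗ (LinearMap.inl Q E₀ F₀).prodMap (LinearMap.inl Q E₁ F₁) =
      LinearMap.lTensor N ((LinearMap.inl Q E₀ F₀).prodMap (LinearMap.inl Q E₁ F₁)) ∘ₗ TE)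
    (hF : TF ∘ₗ (LinearMap.snd Q E₀ F₀).prodMap (LinearMap.snd Q E₁ F₁) =
      LinearMap.lTensor N ((LinearMap.snd Q E₀ F₀).prodMap (LinearMap.snd Q E₁ F₁)) ∘ₗ T) :
    strT Q pc₀ sc₀ pc₁ sc₁ T = strT Q p₀ s₀ p₁ s₁ TE + strT Q p₀' s₀' p₁' s₁' TF := by
  simp only [strT_eq_trC_sub_trC]
  rw [trC_prod_of_triangular h₀ h₀' hc₀ (evenBlock_comp_of_comp_prodMap hE)
      (evenBlock_comp_of_comp_prodMap hF),
    trC_prod_of_triangular h₁ h₁' hc₁ (oddBlock_comp_of_comp_prodMap hE)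
      (oddBlock_comp_of_comp_prodMap hF)]
  abel

theorem strT_of_comp_prodComm {r₀ r₁ : ℕ}
    (p₀ : (Fin r₀ → Q) →ₗ[Q] E₀) (s₀ : E₀ →ₗ[Q] (Fin r₀ → Q))
    (p₁ : (Fin r₁ → Q) →ₗ[Q] E₁) (s₁ : E₁ →ₗ[Q] (Fin r₁ → Q))
    {T : (E₀ × E₁) →ₗ[Q] N ⊗[Q] (E₀ × E₁)} {T' : (E₁ × E₀) →ₗ[Q] N ⊗[Q] (E₁ × E₀)}
    (h : T' ∘ₗ (LinearEquiv.prodComm Q E₀ E₁).toLinearMap =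
      LinearMap.lTensor N (LinearEquiv.prodComm Q E₀ E₁).toLinearMap ∘ₗ T) :
    strT Q p₁ s₁ p₀ s₀ T' = -strT Q p₀ s₀ p₁ s₁ T := by
  have even_eq_odd : evenBlock T' = oddBlock T := by
    calc evenBlock T'
        = LinearMap.lTensor N (LinearMap.fst Q E₁ E₀) ∘ₗ
            (T' ∘ₗ (LinearEquiv.prodComm Q E₀ E₁).toLinearMap) ∘ₗ LinearMap.inr Q E₀ E₁ := rfl
      _ = oddBlock T := by
          rw [h, LinearMap.comp_assoc, ← LinearMap.comp_assoc, ← LinearMap.lTensor_comp]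
          rfl
  have odd_eq_even : oddBlock T' = evenBlock T := by
    calc oddBlock T'
        = LinearMap.lTensor N (LinearMap.snd Q E₁ E₀) ∘ₗ
            (T' ∘ₗ (LinearEquiv.prodComm Q E₀ E₁).toLinearMap) ∘ₗ LinearMap.inl Q E₀ E₁ := rfl
      _ = evenBlock T := by
          rw [h, LinearMap.comp_assoc, ← LinearMap.comp_assoc, ← LinearMap.lTensor_comp]
          rfl
  rw [strT_eq_trC_sub_trC, strT_eq_trC_sub_trC, even_eq_odd, odd_eq_even, neg_sub]

end Supertrace

section Iteration

theorem stepMul_comp_lTensor_lTensor (u : E →ₗ[Q] F) :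
    stepMul k Q F ∘ₗ LinearMap.lTensor _ (LinearMap.lTensor _ u) =
      LinearMap.lTensor _ u ∘ₗ stepMul k Q E := by
  ext a ω e
  simp [stepMul]

theorem atIter_comp {AtE : E →ₗ[Q] Ω[Q⁄k] ⊗[Q] E} {AtF : F →ₗ[Q] Ω[Q⁄k] ⊗[Q] F}
    {u : E →ₗ[Q] F} (h : AtF ∘ₗ u = LinearMap.lTensor _ u ∘ₗ AtE) (i : ℕ) :
    atIter k Q F AtF i ∘ₗ u = LinearMap.lTensor _ u ∘ₗ atIter k Q E AtE i := by
  induction i with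
  | zero => rfl
  | succ i ih =>
    calc atIter k Q F AtF (i + 1) ∘ₗ u
        = stepMul k Q F ∘ₗ LinearMap.lTensor _ AtF ∘ₗ atIter k Q F AtF i ∘ₗ u := rfl
      _ = stepMul k Q F ∘ₗ LinearMap.lTensor _ (AtF ∘ₗ u) ∘ₗ atIter k Q E AtE i := by
          rw [ih, LinearMap.lTensor_comp, LinearMap.comp_assoc]
      _ = (stepMul k Q F ∘ₗ LinearMap.lTensor _ (LinearMap.lTensor _ u)) ∘ₗ
            LinearMap.lTensor _ AtE ∘ₗ atIter k Q E AtE i := by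
          rw [h, LinearMap.lTensor_comp, LinearMap.comp_assoc, LinearMap.comp_assoc]
      _ = LinearMap.lTensor _ u ∘ₗ atIter k Q E AtE (i + 1) := by
          rw [stepMul_comp_lTensor_lTensor, LinearMap.comp_assoc, atIter]

theorem atIter_smul (a : Q) (At : E →ₗ[Q] Ω[Q⁄k] ⊗[Q] E) (i : ℕ) :
    atIter k Q E (a • At) i = a ^ i • atIter k Q E At i := by
  induction i with
  | zero => simp only [atIter, pow_zero, one_smul]
  | succ i ih =>
    simp only [atIter, ih, LinearMap.lTensor_smul, LinearMap.smul_comp, LinearMap.comp_smul,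
      smul_smul, pow_succ]

end Iteration

namespace Conn

theorem toFun_zero (c : Conn k Q E) : c.toFun 0 = 0 :=
  (AddMonoidHom.mk' c.toFun c.map_add).map_zero

theorem toFun_neg (c : Conn k Q E) (x : E) : c.toFun (-x) = -c.toFun x :=
  (AddMonoidHom.mk' c.toFun c.map_add).map_neg x

/-- A linear map is parallel if it intertwines the connections on its source and target. -/
def IsParallel (c : Conn k Q E) (c' : Conn k Q F) (u : E →ₗ[Q] F) : Prop :=
  ∀ e, c'.toFun (u e) = LinearMap.lTensor (Ω[Q⁄k]) u (c.toFun e)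

/-- The direct-sum connection. -/
noncomputable def prod (c : Conn k Q E) (c' : Conn k Q F) : Conn k Q (E × F) where
  toFun z := LinearMap.lTensor (Ω[Q⁄k]) (LinearMap.inl Q E F) (c.toFun z.1) +
    LinearMap.lTensor (Ω[Q⁄k]) (LinearMap.inr Q E F) (c'.toFun z.2)
  map_add x y := by
    simp only [Prod.fst_add, Prod.snd_add, c.map_add, c'.map_add, _root_.map_add]
    abel
  leibniz q x := by
    have split : x = (x.1, 0) + (0, x.2) := by simp
    conv_rhs => rw [split]
    simp only [Prod.smul_fst, Prod.smul_snd, c.leibniz, c'.leibniz, _root_.map_add, map_smul,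
      LinearMap.lTensor_tmul, LinearMap.inl_apply, LinearMap.inr_apply, TensorProduct.tmul_add,
      smul_add]
    simp only [Prod.mk_add_mk, add_zero, zero_add]
    abel

theorem eq_prod {c : Conn k Q E} {c' : Conn k Q F} {d : Conn k Q (E × F)}
    (h : ∀ z, d.toFun z = LinearMap.lTensor (Ω[Q⁄k]) (LinearMap.inl Q E F) (c.toFun z.1) +
      LinearMap.lTensor (Ω[Q⁄k]) (LinearMap.inr Q E F) (c'.toFun z.2)) :
    d = c.prod c' :=
  Conn.ext (funext h)

theorem isParallel_inl (c : Conn k Q E) (c' : Conn k Q F) :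
    c.IsParallel (c.prod c') (LinearMap.inl Q E F) := fun e => by
  simp [prod, toFun_zero]

theorem isParallel_snd (c : Conn k Q E) (c' : Conn k Q F) :
    (c.prod c').IsParallel c' (LinearMap.snd Q E F) := fun z => by
  simp only [prod, _root_.map_add, ← LinearMap.lTensor_comp_apply]
  simp

/-- The Atiyah map `∇' ∘ δ - (1 ⊗ δ) ∘ ∇` of a linear map `δ` between modules with connections. -/
noncomputable def atiyah (c : Conn k Q E) (c' : Conn k Q F) (δ : E →ₗ[Q] F) :
    E →ₗ[Q] Ω[Q⁄k] ⊗[Q] F where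
  toFun e := c'.toFun (δ e) - LinearMap.lTensor (Ω[Q⁄k]) δ (c.toFun e)
  map_add' x y := by
    simp only [_root_.map_add, c.map_add, c'.map_add]
    abel
  map_smul' q x := by
    simp only [map_smul, c.leibniz, c'.leibniz, _root_.map_add, LinearMap.lTensor_tmul,
      RingHom.id_apply, smul_sub]
    abel

theorem eq_atiyah {c : Conn k Q E} {c' : Conn k Q F} {δ : E →ₗ[Q] F}
    {g : E →ₗ[Q] Ω[Q⁄k] ⊗[Q] F}
    (h : ∀ e, g e = c'.toFun (δ e) - LinearMap.lTensor (Ω[Q⁄k]) δ (c.toFun e)) :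
    g = c.atiyah c' δ :=
  LinearMap.ext h

theorem atiyah_neg (c : Conn k Q E) (c' : Conn k Q F) (δ : E →ₗ[Q] F) :
    c.atiyah c' (-δ) = -c.atiyah c' δ := by
  ext e
  simp only [atiyah, LinearMap.coe_mk, AddHom.coe_mk, LinearMap.neg_apply, toFun_neg,
    LinearMap.lTensor_neg]
  abel

theorem IsParallel.atiyah_comp {c₀ : Conn k Q E₀} {c₁ : Conn k Q E₁} {d₀ : Conn k Q F₀}
    {d₁ : Conn k Q F₁} {u₀ : E₀ →ₗ[Q] F₀} {u₁ : E₁ →ₗ[Q] F₁} (h₀ : c₀.IsParallel d₀ u₀)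
    (h₁ : c₁.IsParallel d₁ u₁) {δ : E₁ →ₗ[Q] E₀} {δ' : F₁ →ₗ[Q] F₀}
    (h : δ' ∘ₗ u₁ = u₀ ∘ₗ δ) :
    d₁.atiyah d₀ δ' ∘ₗ u₁ = LinearMap.lTensor _ u₀ ∘ₗ c₁.atiyah c₀ δ := by
  ext e
  calc d₀.toFun (δ' (u₁ e)) - LinearMap.lTensor _ δ' (d₁.toFun (u₁ e))
      = d₀.toFun ((δ' ∘ₗ u₁) e) - LinearMap.lTensor _ (δ' ∘ₗ u₁) (c₁.toFun e) := by
        rw [h₁, LinearMap.lTensor_comp_apply, LinearMap.comp_apply]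
    _ = LinearMap.lTensor _ u₀ (c₀.toFun (δ e) - LinearMap.lTensor _ δ (c₁.toFun e)) := by
        rw [h, LinearMap.comp_apply, h₀, LinearMap.lTensor_comp_apply, map_sub]

end Conn

section AtiyahClass

/-- The Atiyah class of a pair of maps `A : E₁ → E₀`, `B : E₀ → E₁`, as an odd map on `E₀ ⊕ E₁`. -/
noncomputable def atiyahClass (c₀ : Conn k Q E₀) (c₁ : Conn k Q E₁)
    (A : E₁ →ₗ[Q] E₀) (B : E₀ →ₗ[Q] E₁) : (E₀ × E₁) →ₗ[Q] Ω[Q⁄k] ⊗[Q] (E₀ × E₁) :=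
  LinearMap.lTensor (Ω[Q⁄k]) (LinearMap.inr Q E₀ E₁) ∘ₗ c₀.atiyah c₁ B ∘ₗ LinearMap.fst Q E₀ E₁ +
    LinearMap.lTensor (Ω[Q⁄k]) (LinearMap.inl Q E₀ E₁) ∘ₗ c₁.atiyah c₀ A ∘ₗ LinearMap.snd Q E₀ E₁

theorem atiyahClass_comp_prodMap {c₀ : Conn k Q E₀} {c₁ : Conn k Q E₁} {d₀ : Conn k Q F₀}
    {d₁ : Conn k Q F₁} {u₀ : E₀ →ₗ[Q] F₀} {u₁ : E₁ →ₗ[Q] F₁} (h₀ : c₀.IsParallel d₀ u₀)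
    (h₁ : c₁.IsParallel d₁ u₁) {A : E₁ →ₗ[Q] E₀} {B : E₀ →ₗ[Q] E₁} {A' : F₁ →ₗ[Q] F₀}
    {B' : F₀ →ₗ[Q] F₁} (hA : A' ∘ₗ u₁ = u₀ ∘ₗ A) (hB : B' ∘ₗ u₀ = u₁ ∘ₗ B) :
    atiyahClass d₀ d₁ A' B' ∘ₗ u₀.prodMap u₁ =
      LinearMap.lTensor _ (u₀.prodMap u₁) ∘ₗ atiyahClass c₀ c₁ A B := by
  have hAt₀ (x : E₀) := LinearMap.congr_fun (h₁.atiyah_comp h₀ hB) x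
  have hAt₁ (y : E₁) := LinearMap.congr_fun (h₀.atiyah_comp h₁ hA) y
  simp only [LinearMap.comp_apply] at hAt₀ hAt₁
  have prodMap_inl : u₀.prodMap u₁ ∘ₗ LinearMap.inl Q E₀ E₁ = LinearMap.inl Q F₀ F₁ ∘ₗ u₀ := by
    ext x <;> simp
  have prodMap_inr : u₀.prodMap u₁ ∘ₗ LinearMap.inr Q E₀ E₁ = LinearMap.inr Q F₀ F₁ ∘ₗ u₁ := by
    ext x <;> simp
  apply LinearMap.ext
  rintro ⟨x, y⟩
  simp only [atiyahClass, LinearMap.comp_apply, LinearMap.add_apply, LinearMap.prodMap_apply,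
    LinearMap.fst_apply, LinearMap.snd_apply, map_add, hAt₀, hAt₁,
    ← LinearMap.lTensor_comp_apply, prodMap_inl, prodMap_inr]

-- The shift `P[1]` has the modules of `P` in exchanged parities and the differentials `-B`, `-A`.
theorem atiyahClass_shift (c₀ : Conn k Q E₀) (c₁ : Conn k Q E₁)
    (A : E₁ →ₗ[Q] E₀) (B : E₀ →ₗ[Q] E₁) :
    atiyahClass c₁ c₀ (-B) (-A) ∘ₗ (LinearEquiv.prodComm Q E₀ E₁).toLinearMap =
      LinearMap.lTensor _ (LinearEquiv.prodComm Q E₀ E₁).toLinearMap ∘ₗ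
        (-atiyahClass c₀ c₁ A B) := by
  have comm_inl : (LinearEquiv.prodComm Q E₀ E₁).toLinearMap ∘ₗ LinearMap.inl Q E₀ E₁ =
      LinearMap.inr Q E₁ E₀ := rfl
  have comm_inr : (LinearEquiv.prodComm Q E₀ E₁).toLinearMap ∘ₗ LinearMap.inr Q E₀ E₁ =
      LinearMap.inl Q E₁ E₀ := rfl
  apply LinearMap.ext
  rintro ⟨x, y⟩
  simp only [atiyahClass, Conn.atiyah_neg, LinearMap.comp_apply, LinearMap.add_apply,
    LinearMap.neg_apply, LinearMap.fst_apply, LinearMap.snd_apply, LinearEquiv.coe_coe,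
    LinearEquiv.prodComm_apply, Prod.swap_prod_mk, map_add, map_neg,
    ← LinearMap.lTensor_comp_apply, comm_inl, comm_inr]
  abel

theorem strT_atIter_atiyahClass_shift {r₀ r₁ : ℕ}
    (p₀ : (Fin r₀ → Q) →ₗ[Q] E₀) (s₀ : E₀ →ₗ[Q] (Fin r₀ → Q))
    (p₁ : (Fin r₁ → Q) →ₗ[Q] E₁) (s₁ : E₁ →ₗ[Q] (Fin r₁ → Q))
    (c₀ : Conn k Q E₀) (c₁ : Conn k Q E₁) (A : E₁ →ₗ[Q] E₀) (B : E₀ →ₗ[Q] E₁) (i : ℕ) :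
    strT Q p₁ s₁ p₀ s₀ (atIter k Q _ (atiyahClass c₁ c₀ (-B) (-A)) (2 * i)) =
      -strT Q p₀ s₀ p₁ s₁ (atIter k Q _ (atiyahClass c₀ c₁ A B) (2 * i)) := by
  have even_power : atIter k Q _ (-atiyahClass c₀ c₁ A B) (2 * i) =
      atIter k Q _ (atiyahClass c₀ c₁ A B) (2 * i) := by
    rw [← neg_one_smul Q (atiyahClass c₀ c₁ A B), atIter_smul, (even_two_mul i).neg_one_pow,
      one_smul]
  rw [← even_power]
  exact strT_of_comp_prodComm p₀ s₀ p₁ s₁ (atIter_comp (atiyahClass_shift c₀ c₁ A B) (2 * i))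

end AtiyahClass

section Cone

variable {P₀ P₁ R₀ R₁ : Type u}
  [AddCommGroup P₀] [Module Q P₀] [AddCommGroup P₁] [Module Q P₁]
  [AddCommGroup R₀] [Module Q R₀] [AddCommGroup R₁] [Module Q R₁]

/-- The differential `[C, θ; 0, -B]` of a mapping cone. -/
def coneDifferential (C : R₁ →ₗ[Q] R₀) (θ : P₀ →ₗ[Q] R₀) (B : P₀ →ₗ[Q] P₁) :
    (R₁ × P₀) →ₗ[Q] (R₀ × P₁) :=
  (C.coprod θ).prod (-(B ∘ₗ LinearMap.snd Q R₁ P₀))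

theorem eq_coneDifferential {C : R₁ →ₗ[Q] R₀} {θ : P₀ →ₗ[Q] R₀} {B : P₀ →ₗ[Q] P₁}
    {g : (R₁ × P₀) →ₗ[Q] (R₀ × P₁)} (h : ∀ z, g z = (C z.1 + θ z.2, -B z.2)) :
    g = coneDifferential C θ B :=
  LinearMap.ext h

theorem coneDifferential_comp_inl (C : R₁ →ₗ[Q] R₀) (θ : P₀ →ₗ[Q] R₀) (B : P₀ →ₗ[Q] P₁) :
    coneDifferential C θ B ∘ₗ LinearMap.inl Q R₁ P₀ = LinearMap.inl Q R₀ P₁ ∘ₗ C := by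
  ext x <;> simp [coneDifferential]

theorem snd_comp_coneDifferential (C : R₁ →ₗ[Q] R₀) (θ : P₀ →ₗ[Q] R₀) (B : P₀ →ₗ[Q] P₁) :
    LinearMap.snd Q R₀ P₁ ∘ₗ coneDifferential C θ B = (-B) ∘ₗ LinearMap.snd Q R₁ P₀ :=
  rfl

theorem chern_character_additive_on_cones_general {a₀ a₁ b₀ b₁ c₀ c₁ : ℕ}
    {pP₀ : (Fin a₀ → Q) →ₗ[Q] P₀} {sP₀ : P₀ →ₗ[Q] (Fin a₀ → Q)} (hP₀ : ∀ e, pP₀ (sP₀ e) = e)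
    {pP₁ : (Fin a₁ → Q) →ₗ[Q] P₁} {sP₁ : P₁ →ₗ[Q] (Fin a₁ → Q)} (hP₁ : ∀ e, pP₁ (sP₁ e) = e)
    {pR₀ : (Fin b₀ → Q) →ₗ[Q] R₀} {sR₀ : R₀ →ₗ[Q] (Fin b₀ → Q)} (hR₀ : ∀ e, pR₀ (sR₀ e) = e)
    {pR₁ : (Fin b₁ → Q) →ₗ[Q] R₁} {sR₁ : R₁ →ₗ[Q] (Fin b₁ → Q)} (hR₁ : ∀ e, pR₁ (sR₁ e) = e)
    {pC₀ : (Fin c₀ → Q) →ₗ[Q] (R₀ × P₁)} {sC₀ : (R₀ × P₁) →ₗ[Q] (Fin c₀ → Q)}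
    (hC₀ : ∀ e, pC₀ (sC₀ e) = e)
    {pC₁ : (Fin c₁ → Q) →ₗ[Q] (R₁ × P₀)} {sC₁ : (R₁ × P₀) →ₗ[Q] (Fin c₁ → Q)}
    (hC₁ : ∀ e, pC₁ (sC₁ e) = e)
    (A : P₁ →ₗ[Q] P₀) (B : P₀ →ₗ[Q] P₁) (C : R₁ →ₗ[Q] R₀) (D : R₀ →ₗ[Q] R₁)
    (θ₀ : P₀ →ₗ[Q] R₀) (θ₁ : P₁ →ₗ[Q] R₁)
    (naP₀ : Conn k Q P₀) (naP₁ : Conn k Q P₁) (naR₀ : Conn k Q R₀) (naR₁ : Conn k Q R₁)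
    (i : ℕ) :
    strT Q pR₀ sR₀ pR₁ sR₁ (atIter k Q _ (atiyahClass naR₀ naR₁ C D) (2 * i)) =
      strT Q pP₀ sP₀ pP₁ sP₁ (atIter k Q _ (atiyahClass naP₀ naP₁ A B) (2 * i)) +
      strT Q pC₀ sC₀ pC₁ sC₁ (atIter k Q _ (atiyahClass (naR₀.prod naP₁) (naR₁.prod naP₀)
        (coneDifferential C θ₀ B) (coneDifferential D θ₁ A)) (2 * i)) := by
  have inclusion := atiyahClass_comp_prodMap (naR₀.isParallel_inl naP₁) (naR₁.isParallel_inl naP₀)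
    (coneDifferential_comp_inl C θ₀ B) (coneDifferential_comp_inl D θ₁ A)
  have projection := atiyahClass_comp_prodMap (naR₀.isParallel_snd naP₁)
    (naR₁.isParallel_snd naP₀) (snd_comp_coneDifferential C θ₀ B).symm
    (snd_comp_coneDifferential D θ₁ A).symm
  rw [strT_prod_of_triangular hR₀ hR₁ hP₁ hP₀ hC₀ hC₁ (atIter_comp inclusion (2 * i))
      (atIter_comp projection (2 * i)),
    strT_atIter_atiyahClass_shift pP₀ sP₀ pP₁ sP₁]
  abel

end Cone

end

theorem chern_character_additive_on_cones
    [Algebra ℚ k] [Algebra ℚ Q] [IsScalarTower ℚ k Q]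
    (n : ℕ) [Algebra.Smooth k Q]
    (hdim : ∀ ω : Fin (n + 1) → Ω[Q⁄k],
      (List.ofFn (fun t => ExteriorAlgebra.ι Q (ω t))).prod = 0)
    (P₀ P₁ R₀ R₁ : Type u)
    [AddCommGroup P₀] [Module Q P₀] [AddCommGroup P₁] [Module Q P₁]
    [AddCommGroup R₀] [Module Q R₀] [AddCommGroup R₁] [Module Q R₁]
    [Module.Finite Q P₀] [Module.Projective Q P₀]
    [Module.Finite Q P₁] [Module.Projective Q P₁]
    [Module.Finite Q R₀] [Module.Projective Q R₀]
    [Module.Finite Q R₁] [Module.Projective Q R₁]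
    -- presentations as retracts of finite free modules
    {a₀ a₁ b₀ b₁ c₀ c₁ : ℕ}
    (pP₀ : (Fin a₀ → Q) →ₗ[Q] P₀) (sP₀ : P₀ →ₗ[Q] (Fin a₀ → Q)) (hP₀ : ∀ e, pP₀ (sP₀ e) = e)
    (pP₁ : (Fin a₁ → Q) →ₗ[Q] P₁) (sP₁ : P₁ →ₗ[Q] (Fin a₁ → Q)) (hP₁ : ∀ e, pP₁ (sP₁ e) = e)
    (pR₀ : (Fin b₀ → Q) →ₗ[Q] R₀) (sR₀ : R₀ →ₗ[Q] (Fin b₀ → Q)) (hR₀ : ∀ e, pR₀ (sR₀ e) = e)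
    (pR₁ : (Fin b₁ → Q) →ₗ[Q] R₁) (sR₁ : R₁ →ₗ[Q] (Fin b₁ → Q)) (hR₁ : ∀ e, pR₁ (sR₁ e) = e)
    (pC₀ : (Fin c₀ → Q) →ₗ[Q] (R₀ × P₁)) (sC₀ : (R₀ × P₁) →ₗ[Q] (Fin c₀ → Q))
    (hC₀ : ∀ e, pC₀ (sC₀ e) = e)
    (pC₁ : (Fin c₁ → Q) →ₗ[Q] (R₁ × P₀)) (sC₁ : (R₁ × P₀) →ₗ[Q] (Fin c₁ → Q))
    (hC₁ : ∀ e, pC₁ (sC₁ e) = e)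
    (f : Q)
    -- the matrix factorization P = (P₁ -A→ P₀ -B→ P₁)
    (A : P₁ →ₗ[Q] P₀) (B : P₀ →ₗ[Q] P₁)
    (hAB : ∀ y, A (B y) = f • y) (hBA : ∀ x, B (A x) = f • x)
    -- the matrix factorization R = (R₁ -C→ R₀ -D→ R₁)
    (C : R₁ →ₗ[Q] R₀) (D : R₀ →ₗ[Q] R₁)
    (hCD : ∀ y, C (D y) = f • y) (hDC : ∀ x, D (C x) = f • x)
    -- a strict morphism θ : P → R
    (θ₀ : P₀ →ₗ[Q] R₀) (θ₁ : P₁ →ₗ[Q] R₁)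
    (hθ : C ∘ₗ θ₁ = θ₀ ∘ₗ A ∧ D ∘ₗ θ₀ = θ₁ ∘ₗ B)
    -- the differentials of cone(θ)
    (Ac : (R₁ × P₀) →ₗ[Q] (R₀ × P₁)) (Bc : (R₀ × P₁) →ₗ[Q] (R₁ × P₀))
    (hAc : ∀ z : R₁ × P₀, Ac z = (C z.1 + θ₀ z.2, - B z.2))
    (hBc : ∀ z : R₀ × P₁, Bc z = (D z.1 + θ₁ z.2, - A z.2))
    -- connections on P, R, and the direct-sum connections on cone(θ)
    (naP0 : Conn k Q P₀) (naP1 : Conn k Q P₁) (naR0 : Conn k Q R₀) (naR1 : Conn k Q R₁)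
    (naC0 : Conn k Q (R₀ × P₁)) (naC1 : Conn k Q (R₁ × P₀))
    (hnaC0 : ∀ z : R₀ × P₁, naC0.toFun z =
      (LinearMap.lTensor (Ω[Q⁄k]) (LinearMap.inl Q R₀ P₁)) (naR0.toFun z.1)
        + (LinearMap.lTensor (Ω[Q⁄k]) (LinearMap.inr Q R₀ P₁)) (naP1.toFun z.2))
    (hnaC1 : ∀ z : R₁ × P₀, naC1.toFun z =
      (LinearMap.lTensor (Ω[Q⁄k]) (LinearMap.inl Q R₁ P₀)) (naR1.toFun z.1)
        + (LinearMap.lTensor (Ω[Q⁄k]) (LinearMap.inr Q R₁ P₀)) (naP0.toFun z.2))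
    -- the Atiyah classes of P, R and cone(θ)
    (AtP₁ : P₁ →ₗ[Q] Ω[Q⁄k] ⊗[Q] P₀) (AtP₀ : P₀ →ₗ[Q] Ω[Q⁄k] ⊗[Q] P₁)
    (hAtP₁ : ∀ e, AtP₁ e = naP0.toFun (A e) - (LinearMap.lTensor (Ω[Q⁄k]) A) (naP1.toFun e))
    (hAtP₀ : ∀ e, AtP₀ e = naP1.toFun (B e) - (LinearMap.lTensor (Ω[Q⁄k]) B) (naP0.toFun e))
    (AtP : (P₀ × P₁) →ₗ[Q] Ω[Q⁄k] ⊗[Q] (P₀ × P₁))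
    (hAtP : AtP = (LinearMap.lTensor (Ω[Q⁄k]) (LinearMap.inr Q P₀ P₁)) ∘ₗ AtP₀ ∘ₗ
          LinearMap.fst Q P₀ P₁
        + (LinearMap.lTensor (Ω[Q⁄k]) (LinearMap.inl Q P₀ P₁)) ∘ₗ AtP₁ ∘ₗ
          LinearMap.snd Q P₀ P₁)
    (AtR₁ : R₁ →ₗ[Q] Ω[Q⁄k] ⊗[Q] R₀) (AtR₀ : R₀ →ₗ[Q] Ω[Q⁄k] ⊗[Q] R₁)
    (hAtR₁ : ∀ e, AtR₁ e = naR0.toFun (C e) - (LinearMap.lTensor (Ω[Q⁄k]) C) (naR1.toFun e))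
    (hAtR₀ : ∀ e, AtR₀ e = naR1.toFun (D e) - (LinearMap.lTensor (Ω[Q⁄k]) D) (naR0.toFun e))
    (AtR : (R₀ × R₁) →ₗ[Q] Ω[Q⁄k] ⊗[Q] (R₀ × R₁))
    (hAtR : AtR = (LinearMap.lTensor (Ω[Q⁄k]) (LinearMap.inr Q R₀ R₁)) ∘ₗ AtR₀ ∘ₗ
          LinearMap.fst Q R₀ R₁
        + (LinearMap.lTensor (Ω[Q⁄k]) (LinearMap.inl Q R₀ R₁)) ∘ₗ AtR₁ ∘ₗ
          LinearMap.snd Q R₀ R₁)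
    (AtC₁ : (R₁ × P₀) →ₗ[Q] Ω[Q⁄k] ⊗[Q] (R₀ × P₁))
    (AtC₀ : (R₀ × P₁) →ₗ[Q] Ω[Q⁄k] ⊗[Q] (R₁ × P₀))
    (hAtC₁ : ∀ e, AtC₁ e = naC0.toFun (Ac e) - (LinearMap.lTensor (Ω[Q⁄k]) Ac) (naC1.toFun e))
    (hAtC₀ : ∀ e, AtC₀ e = naC1.toFun (Bc e) - (LinearMap.lTensor (Ω[Q⁄k]) Bc) (naC0.toFun e))
    (AtC : ((R₀ × P₁) × (R₁ × P₀)) →ₗ[Q] Ω[Q⁄k] ⊗[Q] ((R₀ × P₁) × (R₁ × P₀)))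
    (hAtC : AtC = (LinearMap.lTensor (Ω[Q⁄k]) (LinearMap.inr Q (R₀ × P₁) (R₁ × P₀))) ∘ₗ AtC₀ ∘ₗ
          LinearMap.fst Q (R₀ × P₁) (R₁ × P₀)
        + (LinearMap.lTensor (Ω[Q⁄k]) (LinearMap.inl Q (R₀ × P₁) (R₁ × P₀))) ∘ₗ AtC₁ ∘ₗ
          LinearMap.snd Q (R₀ × P₁) (R₁ × P₀)) :
    ∀ i : ℕ,
      strT Q pR₀ sR₀ pR₁ sR₁ (atIter k Q (R₀ × R₁) AtR (2 * i))
        = strT Q pP₀ sP₀ pP₁ sP₁ (atIter k Q (P₀ × P₁) AtP (2 * i))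
          + strT Q pC₀ sC₀ pC₁ sC₁ (atIter k Q ((R₀ × P₁) × (R₁ × P₀)) AtC (2 * i)) := by
  intro i
  rw [hAtR, hAtP, hAtC, Conn.eq_atiyah hAtR₀, Conn.eq_atiyah hAtR₁, Conn.eq_atiyah hAtP₀,
    Conn.eq_atiyah hAtP₁, Conn.eq_atiyah hAtC₀, Conn.eq_atiyah hAtC₁, Conn.eq_prod hnaC0,
    Conn.eq_prod hnaC1, eq_coneDifferential hAc, eq_coneDifferential hBc]
  exact chern_character_additive_on_cones_general hP₀ hP₁ hR₀ hR₁ hC₀ hC₁ A B C D θ₀ θ₁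
    naP0 naP1 naR0 naR1 i
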